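/- Let Q ≥ 2 and ℓ₁,…,ℓ_Q ∈ ℕ₀. Suppose the Fourier transform φ_K of the kernel K is supported in [−1, 1] with ‖φ_K^{(ℓ_q)}‖_∞ < ∞ for q = 1,…,Q, and that U is super smooth of order β (with constants d₀, d₁ > 0, γ > 0, β₀, β₁ ∈ ℝ) and φ_U(t) ≠ 0 for all t. Then there exist a constant C > 0 and h₀ > 0 such that for all 0 < h < h₀, | ∫ ∏_{q=1}^Q K_{U,ℓ_q}(v) dv | ≤ C h^{Qβ₂} exp(Q h^{−β}/γ), where β₂ = β₀·1{β₀ < 0.5}. -/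

import Mathlib

open MeasureTheory Filter Topology Complex

open scoped FourierTransform SchwartzMap ENNReal

/-!
After the substitution `t = 2πs` the kernel `K_{U,ℓ}` is, up to a unimodular constant, the Fourier
transform of a function supported in `[-1/(2π), 1/(2π)]`. Since `r ^ β₀ * exp (-r ^ β / γ)` is
eventually decreasing and `φ_U` is bounded away from zero on compact sets, this function is
`O(h ^ β₀ * exp (h ^ (-β) / γ))`. Hence `K_{U,ℓ}` is bounded by a constant multiple of this rate in
`L^∞` trivially and in `L²` by Plancherel, so in `L^Q` as well, and Hölder's inequality bounds the
integral of a product of `Q` such kernels.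
-/

section Plancherel

variable {V E : Type*} [NormedAddCommGroup V] [InnerProductSpace ℝ V] [FiniteDimensional ℝ V]
  [MeasurableSpace V] [BorelSpace V] [NormedAddCommGroup E]

section

variable [NormedSpace ℂ E]

lemma fourier_eq_zero_of_not_integrable {f : V → E} (hf : ¬ Integrable f) : 𝓕 f = 0 :=
  funext fun w ↦ integral_undef fun h ↦ hf ((Real.fourierIntegral_convergent_iff w).1 h)

lemma continuous_fourier (f : V → E) : Continuous (𝓕 f) := by
  by_cases hf : Integrable f
  · exact VectorFourier.fourierIntegral_continuous Real.continuous_fourierChar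
      (innerSL ℝ).continuous₂ hf
  · rw [fourier_eq_zero_of_not_integrable hf]
    exact continuous_zero

lemma enorm_fourier_le_lintegral_enorm (f : V → E) (w : V) : ‖𝓕 f w‖ₑ ≤ ∫⁻ v, ‖f v‖ₑ := by
  rw [Real.fourier_eq]
  refine (enorm_integral_le_lintegral_enorm _).trans_eq (lintegral_congr fun v ↦ ?_)
  rw [← ofReal_norm, ← ofReal_norm, Circle.norm_smul]

end

variable [InnerProductSpace ℂ E] [CompleteSpace E]

lemma coeFn_fourier_toLp {f : V → E} (hf : Integrable f) (hf₂ : MemLp f 2) :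
    (𝓕 (hf₂.toLp f) : Lp E 2 volume) =ᵐ[volume] 𝓕 f := by
  refine ae_eq_of_integral_contDiff_smul_eq ((Lp.memLp _).locallyIntegrable one_le_two)
    (continuous_fourier f).locallyIntegrable fun g g_smooth g_compact ↦ ?_
  let ψ : 𝓢(V, ℂ) := (g_compact.comp_left (g := ofRealCLM) rfl).toSchwartzMap
    (ofRealCLM.contDiff.comp g_smooth)
  calc ∫ x, g x • (𝓕 (hf₂.toLp f) : Lp E 2 volume) x
      = ∫ x, ψ x • (𝓕 (hf₂.toLp f) : Lp E 2 volume) x := by simp [ψ]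
    _ = ∫ x, 𝓕 ψ x • hf₂.toLp f x := by
      rw [← Lp.toTemperedDistribution_apply, ← Lp.fourier_toTemperedDistribution_eq,
        TemperedDistribution.fourier_apply, Lp.toTemperedDistribution_apply]
    _ = ∫ x, 𝓕 ψ x • f x :=
      integral_congr_ae (hf₂.coeFn_toLp.mono fun x hx ↦ by simp only [hx])
    _ = ∫ x, ψ x • 𝓕 f x := by
      simpa only [SchwartzMap.fourier_coe, flip_innerₗ] using!
        VectorFourier.integral_fourierIntegral_smul_eq_flip (L := innerₗ V)
          Real.continuous_fourierChar continuous_inner ψ.integrable hf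
    _ = ∫ x, g x • 𝓕 f x := by simp [ψ]

lemma eLpNorm_fourier_eq {f : V → E} (hf : Integrable f) (hf₂ : MemLp f 2) :
    eLpNorm (𝓕 f) 2 = eLpNorm f 2 := by
  rw [← eLpNorm_congr_ae (coeFn_fourier_toLp hf hf₂), ← Lp.enorm_def, ← Lp.enorm_toLp hf₂]
  simp only [← ofReal_norm, Lp.norm_fourier_eq]

lemma eLpNorm_fourier_le (f : V → E) : eLpNorm (𝓕 f) 2 ≤ eLpNorm f 2 := by
  by_cases hf : Integrable f
  · by_cases hf₂ : MemLp f 2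
    · exact (eLpNorm_fourier_eq hf hf₂).le
    · have h_top : eLpNorm f 2 = ∞ := by simpa [MemLp, hf.aestronglyMeasurable] using hf₂
      exact h_top ▸ le_top
  · simp [fourier_eq_zero_of_not_integrable hf]

lemma lintegral_enorm_fourier_sq_le (f : V → E) :
    ∫⁻ w, ‖𝓕 f w‖ₑ ^ 2 ≤ ∫⁻ v, ‖f v‖ₑ ^ 2 := by
  have lintegral_eq (g : V → E) : ∫⁻ v, ‖g v‖ₑ ^ 2 = eLpNorm g 2 ^ 2 := by
    simpa using (eLpNorm_nnreal_pow_eq_lintegral (f := g) (p := 2) two_ne_zero).symm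
  rw [lintegral_eq, lintegral_eq]
  gcongr
  exact eLpNorm_fourier_le f

end Plancherel

section ProductBound

variable {ι : Type*} [Fintype ι]

lemma lintegral_prod_le_of_le_of_lintegral_sq_le {α : Type*} [MeasurableSpace α] {μ : Measure α}
    (hι : 2 ≤ Fintype.card ι) {G : ι → α → ℝ≥0∞} (hG : ∀ i, AEMeasurable (G i) μ) {M S : ℝ≥0∞}
    (hM : ∀ i x, G i x ≤ M) (hS : ∀ i, ∫⁻ x, G i x ^ 2 ∂μ ≤ S) :
    ∫⁻ x, ∏ i, G i x ∂μ ≤ M ^ (Fintype.card ι - 2) * S := by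
  set n := Fintype.card ι with hn
  have hn₀ : n ≠ 0 := by lia
  have lintegral_pow_le (i : ι) : ∫⁻ x, G i x ^ n ∂μ ≤ M ^ (n - 2) * S :=
    calc ∫⁻ x, G i x ^ n ∂μ = ∫⁻ x, G i x ^ (n - 2) * G i x ^ 2 ∂μ := by
          simp only [← pow_add, Nat.sub_add_cancel hι]
      _ ≤ ∫⁻ x, M ^ (n - 2) * G i x ^ 2 ∂μ := by gcongr with x; exact hM i x
      _ = M ^ (n - 2) * ∫⁻ x, G i x ^ 2 ∂μ := lintegral_const_mul'' _ ((hG i).pow_const 2)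
      _ ≤ M ^ (n - 2) * S := by gcongr; exact hS i
  calc ∫⁻ x, ∏ i, G i x ∂μ = ∫⁻ x, ∏ i, (G i x ^ n) ^ (n⁻¹ : ℝ) ∂μ := by
        simp only [ENNReal.pow_rpow_inv_natCast hn₀]
    _ ≤ ∏ i, (∫⁻ x, G i x ^ n ∂μ) ^ (n⁻¹ : ℝ) :=
      ENNReal.lintegral_prod_norm_pow_le Finset.univ (fun i _ ↦ (hG i).pow_const n)
        (by simp [← hn, hn₀]) fun _ _ ↦ by positivity
    _ ≤ ∏ _i : ι, (M ^ (n - 2) * S) ^ (n⁻¹ : ℝ) := by gcongr with i; exact lintegral_pow_le i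
    _ = M ^ (n - 2) * S := by
      rw [Finset.prod_const, Finset.card_univ, ← hn, ENNReal.rpow_inv_natCast_pow hn₀]

variable {V E : Type*} [NormedAddCommGroup V] [InnerProductSpace ℝ V] [FiniteDimensional ℝ V]
  [MeasurableSpace V] [BorelSpace V] [NormedAddCommGroup E] [InnerProductSpace ℂ E]
  [CompleteSpace E]

lemma lintegral_prod_enorm_fourier_le (hι : 2 ≤ Fintype.card ι) {f : ι → V → E} {s : Set V}
    (hs : MeasurableSet s) {B : ℝ≥0∞} (hf : ∀ i v, ‖f i v‖ₑ ≤ s.indicator (fun _ ↦ B) v) :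
    ∫⁻ w, ∏ i, ‖𝓕 (f i) w‖ₑ
      ≤ (B * volume s) ^ (Fintype.card ι - 2) * (B ^ 2 * volume s) := by
  refine lintegral_prod_le_of_le_of_lintegral_sq_le hι
    (fun i ↦ (continuous_fourier (f i)).enorm.measurable.aemeasurable)
    (fun i w ↦ ?_) fun i ↦ ?_
  · calc ‖𝓕 (f i) w‖ₑ ≤ ∫⁻ v, ‖f i v‖ₑ := enorm_fourier_le_lintegral_enorm (f i) w
      _ ≤ ∫⁻ v, s.indicator (fun _ ↦ B) v := lintegral_mono (hf i)
      _ = B * volume s := lintegral_indicator_const hs B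
  · calc ∫⁻ w, ‖𝓕 (f i) w‖ₑ ^ 2 ≤ ∫⁻ v, ‖f i v‖ₑ ^ 2 := lintegral_enorm_fourier_sq_le (f i)
      _ ≤ ∫⁻ v, s.indicator (fun _ ↦ B ^ 2) v := lintegral_mono fun v ↦ by
        by_cases hv : v ∈ s
        · simpa only [Set.indicator_of_mem hv] using pow_le_pow_left₀ zero_le (hf i v) 2
        · simpa only [Set.indicator_of_notMem hv, nonpos_iff_eq_zero, pow_eq_zero_iff two_ne_zero]
            using hf i v
      _ = B ^ 2 * volume s := lintegral_indicator_const hs _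

end ProductBound

section LowerBound

/-- `r ^ β₀ * exp (-r ^ β / γ)`, the decay of a super smooth characteristic function of
order `β`. -/
noncomputable def superSmoothDecay (β₀ β γ r : ℝ) : ℝ := r ^ β₀ * Real.exp (-(r ^ β) / γ)

variable {β₀ β γ : ℝ}

lemma superSmoothDecay_pos {r : ℝ} (hr : 0 < r) : 0 < superSmoothDecay β₀ β γ r := by
  unfold superSmoothDecay
  positivity

lemma superSmoothDecay_le_of_exponent_le {β₂ r : ℝ} (hβ : β₂ ≤ β₀) (hr : 1 ≤ r) :
    superSmoothDecay β₂ β γ r ≤ superSmoothDecay β₀ β γ r := by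
  unfold superSmoothDecay
  gcongr

lemma superSmoothDecay_inv {h : ℝ} (hh : 0 ≤ h) :
    superSmoothDecay β₀ β γ h⁻¹ = (h ^ β₀ * Real.exp (h ^ (-β) / γ))⁻¹ := by
  rw [superSmoothDecay, Real.inv_rpow hh, Real.inv_rpow hh, Real.rpow_neg hh, mul_inv,
    ← Real.exp_neg, neg_div]

lemma superSmoothDecay_le_of_le {s u : ℝ} (hγ : 0 < γ) (hs : 0 < s) (hsu : s ≤ u)
    (hβ₀ : β₀ ≤ s ^ β * β / γ) : superSmoothDecay β₀ β γ u ≤ superSmoothDecay β₀ β γ s := by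
  set x := Real.log (u / s)
  have hx : 0 ≤ x := Real.log_nonneg ((one_le_div hs).2 hsu)
  have hu : u = s * Real.exp x := by
    rw [Real.exp_log (div_pos (hs.trans_le hsu) hs), mul_div_cancel₀ _ hs.ne']
  have rpow_u (b : ℝ) : u ^ b = s ^ b * Real.exp (b * x) := by
    rw [hu, Real.mul_rpow hs.le (Real.exp_pos _).le, ← Real.exp_mul, mul_comm x]
  have rpow_le : s ^ β * (β * x + 1) ≤ u ^ β := by
    rw [rpow_u]
    gcongr
    exact Real.add_one_le_exp _
  have exponent_le : β₀ * x + -(u ^ β) / γ ≤ -(s ^ β) / γ :=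
    calc β₀ * x + -(u ^ β) / γ ≤ s ^ β * β / γ * x + -(s ^ β * (β * x + 1)) / γ := by gcongr
      _ = -(s ^ β) / γ := by ring
  calc superSmoothDecay β₀ β γ u = s ^ β₀ * Real.exp (β₀ * x + -(u ^ β) / γ) := by
        rw [superSmoothDecay, rpow_u β₀, Real.exp_add, mul_assoc]
    _ ≤ s ^ β₀ * Real.exp (-(s ^ β) / γ) := by gcongr

lemma exists_antitoneOn_superSmoothDecay (β₀ : ℝ) (hβ : 0 < β) (hγ : 0 < γ) :
    ∃ T > 0, AntitoneOn (superSmoothDecay β₀ β γ) (Set.Ici T) := by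
  have h_tendsto : Tendsto (fun s : ℝ ↦ s ^ β * β / γ) atTop atTop :=
    ((tendsto_rpow_atTop hβ).atTop_mul_const hβ).atTop_div_const hγ
  obtain ⟨T, hT⟩ := eventually_atTop.1
    ((h_tendsto.eventually_ge_atTop β₀).and (eventually_gt_atTop 0))
  exact ⟨T, (hT T le_rfl).2, fun s hs u _ hsu ↦
    superSmoothDecay_le_of_le hγ (hT s hs).2 hsu (hT s hs).1⟩

lemma exists_forall_mul_le_norm_of_eventually {E F : Type*} [NormedAddCommGroup E] [ProperSpace E]
    [NormedAddCommGroup F] {φ : E → F} (hφ : Continuous φ) (hφ_ne : ∀ t, φ t ≠ 0) {w : ℝ → ℝ}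
    {T d : ℝ} (hT : 0 ≤ T) (hw : AntitoneOn w (Set.Ici T)) (hw_pos : ∀ r ≥ T, 0 < w r)
    (hd : 0 < d) (hφw : ∀ᶠ t in Bornology.cobounded E, d * w ‖t‖ ≤ ‖φ t‖) :
    ∃ c > 0, ∃ R ≥ T, ∀ r ≥ R, ∀ t, ‖t‖ ≤ r → c * w r ≤ ‖φ t‖ := by
  obtain ⟨R₀, -, hR₀⟩ := (hasBasis_cobounded_norm (E := E)).eventually_iff.1 hφw
  set R := max R₀ T
  have hR : T ≤ R := le_max_right _ _
  have hwR := hw_pos R hR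
  obtain ⟨t₀, -, ht₀⟩ := (isCompact_closedBall (0 : E) R).exists_isMinOn
    ⟨0, Metric.mem_closedBall_self (hT.trans hR)⟩ hφ.norm.continuousOn
  have hφt₀ : 0 < ‖φ t₀‖ := norm_pos_iff.2 (hφ_ne t₀)
  refine ⟨min d (‖φ t₀‖ / w R), by positivity, R, hR, fun r hr t htr ↦ ?_⟩
  have hwr := hw_pos r (hR.trans hr)
  rcases le_total ‖t‖ R with htR | hRt
  · calc min d (‖φ t₀‖ / w R) * w r ≤ ‖φ t₀‖ / w R * w R := by
          gcongr
          · exact min_le_right _ _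
          · exact hw hR (hR.trans hr) hr
      _ = ‖φ t₀‖ := div_mul_cancel₀ _ hwR.ne'
      _ ≤ ‖φ t‖ := ht₀ (mem_closedBall_zero_iff.2 htR)
  · calc min d (‖φ t₀‖ / w R) * w r ≤ d * w ‖t‖ := by
          gcongr
          · exact min_le_left _ _
          · exact hw (hR.trans hRt) (hR.trans hr) htr
      _ ≤ ‖φ t‖ := hR₀ ((le_max_left _ _).trans hRt)

lemma eq_charFun_map {Ω : Type*} [MeasurableSpace Ω] {μ : Measure Ω} {U : Ω → ℝ}
    (hU : AEMeasurable U μ) {φU : ℝ → ℂ} (hφU : ∀ t : ℝ, φU t = ∫ ω, cexp (I * t * U ω) ∂μ) :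
    φU = charFun (μ.map U) := by
  funext t
  rw [hφU, charFun_apply_real, integral_map hU (by fun_prop)]
  simp only [mul_comm I, mul_right_comm _ I]

lemma eventually_cobounded_superSmoothDecay_le_norm_charFun {P : Measure ℝ} {β₂ d : ℝ}
    (hd : 0 ≤ d) (hβ₂ : β₂ ≤ β₀)
    (hP : ∀ᶠ t in atTop, d * superSmoothDecay β₀ β γ |t| ≤ ‖charFun P t‖) :
    ∀ᶠ t in Bornology.cobounded ℝ, d * superSmoothDecay β₂ β γ ‖t‖ ≤ ‖charFun P t‖ := by
  filter_upwards [tendsto_norm_cobounded_atTop.eventually (hP.and (eventually_ge_atTop 1))]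
    with t ⟨ht, ht_one⟩
  have norm_charFun_abs : ‖charFun P |t|‖ = ‖charFun P t‖ := by
    rcases abs_choice t with h | h
    · rw [h]
    · rw [h, charFun_neg, RCLike.norm_conj]
  calc d * superSmoothDecay β₂ β γ ‖t‖ ≤ d * superSmoothDecay β₀ β γ ‖t‖ := by
        gcongr
        exact superSmoothDecay_le_of_exponent_le hβ₂ ht_one
    _ ≤ ‖charFun P t‖ := by simpa only [Real.norm_eq_abs, abs_abs, norm_charFun_abs] using ht

end LowerBound

section DeconvolutingKernel

variable (φ φK : ℝ → ℂ) (h : ℝ) (l : ℕ)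

/-- The function `φ_K^{(l)}(t) / φ_U(-t / h)` whose inverse Fourier integral is, up to the factor
`i^{-l}`, the `l`-th deconvoluting kernel; `φ` and `φK` stand for `φ_U` and `φ_K`. -/
noncomputable def deconvolutingSymbol (t : ℝ) : ℂ := iteratedDeriv l φK t / φ (-t / h)

/-- The `l`-th deconvoluting kernel `K_{U,l}` at bandwidth `h`, for an error `U` with
characteristic function `φ` and a kernel `K` with Fourier transform `φK`. -/
noncomputable def deconvolutingKernel (v : ℝ) : ℂ :=
  I ^ (-(l : ℤ)) * (1 / (2 * Real.pi)) *
    ∫ t : ℝ, cexp (-(I * t * v)) * deconvolutingSymbol φ φK h l t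

lemma deconvolutingKernel_eq_fourier (v : ℝ) :
    deconvolutingKernel φ φK h l v
      = I ^ (-(l : ℤ)) * 𝓕 (fun s ↦ deconvolutingSymbol φ φK h l (2 * Real.pi * s)) v := by
  have h_subst := Measure.integral_comp_mul_left
    (fun t : ℝ ↦ cexp (-(I * t * v)) * deconvolutingSymbol φ φK h l t) (2 * Real.pi)
  rw [abs_of_pos (by positivity), real_smul] at h_subst
  rw [deconvolutingKernel, mul_assoc, Real.fourier_real_eq_integral_exp_smul]
  congr 1
  convert h_subst.symm using 1
  · simp
  · refine integral_congr_ae (.of_forall fun s ↦ ?_)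
    simp only [smul_eq_mul]
    congr 2
    push_cast
    ring

lemma enorm_deconvolutingKernel (v : ℝ) :
    ‖deconvolutingKernel φ φK h l v‖ₑ
      = ‖𝓕 (fun s ↦ deconvolutingSymbol φ φK h l (2 * Real.pi * s)) v‖ₑ := by
  simp [deconvolutingKernel_eq_fourier, ← ofReal_norm]

variable {φ φK h l}

lemma enorm_deconvolutingSymbol_le (hh : 0 < h) (hφK : Function.support φK ⊆ Set.Icc (-1) 1)
    {A m : ℝ} (hA : ∀ t, ‖iteratedDeriv l φK t‖ ≤ A) (hm : 0 < m)
    (hφ : ∀ t, ‖t‖ ≤ h⁻¹ → m ≤ ‖φ t‖) (t : ℝ) :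
    ‖deconvolutingSymbol φ φK h l t‖ₑ
      ≤ (Set.Icc (-1) 1).indicator (fun _ ↦ ENNReal.ofReal (A / m)) t := by
  by_cases ht : t ∈ Set.Icc (-1) 1
  · rw [Set.indicator_of_mem ht, ← ofReal_norm, deconvolutingSymbol, norm_div]
    have hth : ‖-t / h‖ ≤ h⁻¹ := by
      rw [norm_div, norm_neg, Real.norm_of_nonneg hh.le, div_eq_mul_inv]
      exact mul_le_of_le_one_left (by positivity) (abs_le.2 ht)
    gcongr
    · exact (norm_nonneg _).trans (hA t)
    · exact hA t
    · exact hφ _ hth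
  · have h_zero : iteratedDeriv l φK t = 0 := by
      rw [← norm_eq_zero, ← norm_iteratedFDeriv_eq_norm_iteratedDeriv, norm_eq_zero]
      exact Function.notMem_support.1 fun h_mem ↦
        ht (closure_minimal hφK isClosed_Icc (support_iteratedFDeriv_subset l h_mem))
    simp [deconvolutingSymbol, h_zero]

lemma norm_integral_prod_deconvolutingKernel_le {ι : Type*} [Fintype ι]
    (hι : 2 ≤ Fintype.card ι) {ℓ : ι → ℕ} (hh : 0 < h)
    (hφK : Function.support φK ⊆ Set.Icc (-1) 1) {A m : ℝ}
    (hA : ∀ i t, ‖iteratedDeriv (ℓ i) φK t‖ ≤ A) (hm : 0 < m)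
    (hφ : ∀ t, ‖t‖ ≤ h⁻¹ → m ≤ ‖φ t‖) :
    ‖∫ v, ∏ i, deconvolutingKernel φ φK h (ℓ i) v‖ ≤ (A / m) ^ Fintype.card ι := by
  set B := ENNReal.ofReal (A / m)
  set s : Set ℝ := (fun s ↦ 2 * Real.pi * s) ⁻¹' Set.Icc (-1) 1
  have hs_vol : volume s ≤ 1 := by
    rw [Real.volume_preimage_mul_left (by positivity), Real.volume_Icc,
      ← ENNReal.ofReal_mul (by positivity), ENNReal.ofReal_le_one, abs_of_pos (by positivity),
      inv_mul_le_one₀ (by positivity)]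
    linarith [Real.pi_gt_three]
  obtain ⟨i₀⟩ : Nonempty ι := Fintype.card_pos_iff.1 (by lia)
  have hA₀ : 0 ≤ A := (norm_nonneg _).trans (hA i₀ 0)
  rw [← ENNReal.ofReal_le_ofReal_iff (by positivity), ofReal_norm,
    ENNReal.ofReal_pow (by positivity)]
  calc ‖∫ v, ∏ i, deconvolutingKernel φ φK h (ℓ i) v‖ₑ
      ≤ ∫⁻ v, ‖∏ i, deconvolutingKernel φ φK h (ℓ i) v‖ₑ := enorm_integral_le_lintegral_enorm _
    _ = ∫⁻ v, ∏ i, ‖𝓕 (fun s ↦ deconvolutingSymbol φ φK h (ℓ i) (2 * Real.pi * s)) v‖ₑ := by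
      simp only [← enorm_deconvolutingKernel]
      simp only [← ofReal_norm, norm_prod, ENNReal.ofReal_prod_of_nonneg fun _ _ ↦ norm_nonneg _]
    _ ≤ (B * volume s) ^ (Fintype.card ι - 2) * (B ^ 2 * volume s) :=
      lintegral_prod_enorm_fourier_le hι (measurableSet_Icc.preimage (by fun_prop)) fun i t ↦
        enorm_deconvolutingSymbol_le hh hφK (hA i) hm hφ (2 * Real.pi * t)
    _ ≤ (B * 1) ^ (Fintype.card ι - 2) * (B ^ 2 * 1) := by gcongr
    _ = B ^ Fintype.card ι := by
      rw [mul_one, mul_one, ← pow_add, Nat.sub_add_cancel hι]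

end DeconvolutingKernel

theorem prod_deconvoluting_kernel_super_smooth_bound_general {ι : Type*} [Fintype ι]
    (hι : 2 ≤ Fintype.card ι) (ℓ : ι → ℕ) {φ φK : ℝ → ℂ} (hφ : Continuous φ)
    (hφ_ne : ∀ t, φ t ≠ 0) {β₀ β γ d : ℝ} (hβ : 0 < β) (hγ : 0 < γ) (hd : 0 < d)
    (hφ_decay : ∀ᶠ t in Bornology.cobounded ℝ, d * superSmoothDecay β₀ β γ ‖t‖ ≤ ‖φ t‖)
    (hφK : Function.support φK ⊆ Set.Icc (-1) 1)
    (hφK_bdd : ∀ i, ∃ C, ∀ t, ‖iteratedDeriv (ℓ i) φK t‖ ≤ C) :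
    ∃ C > 0, ∃ h₀ > 0, ∀ h, 0 < h → h < h₀ →
      ‖∫ v, ∏ i, deconvolutingKernel φ φK h (ℓ i) v‖
        ≤ C * h ^ (Fintype.card ι * β₀) * Real.exp (Fintype.card ι * h ^ (-β) / γ) := by
  obtain ⟨T, hT, h_anti⟩ := exists_antitoneOn_superSmoothDecay β₀ hβ hγ
  obtain ⟨c, hc, R, hTR, hφ_lower⟩ := exists_forall_mul_le_norm_of_eventually hφ hφ_ne hT.le h_anti
    (fun r hr ↦ superSmoothDecay_pos (hT.trans_le hr)) hd hφ_decay
  obtain ⟨A, hA_pos, hA⟩ : ∃ A > 0, ∀ i t, ‖iteratedDeriv (ℓ i) φK t‖ ≤ A := by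
    choose D hD using hφK_bdd
    obtain ⟨M, hM⟩ := Finite.exists_le D
    exact ⟨max 1 M, by positivity, fun i t ↦ (hD i t).trans ((hM i).trans (le_max_right _ _))⟩
  have hR : 0 < R := hT.trans_le hTR
  refine ⟨(A / c) ^ Fintype.card ι, by positivity, R⁻¹, by positivity, fun h hh hh₀ ↦ ?_⟩
  have hRh : R ≤ h⁻¹ := (le_inv_comm₀ hR hh).2 hh₀.le
  calc ‖∫ v, ∏ i, deconvolutingKernel φ φK h (ℓ i) v‖
      ≤ (A / (c * superSmoothDecay β₀ β γ h⁻¹)) ^ Fintype.card ι :=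
        norm_integral_prod_deconvolutingKernel_le hι hh hφK hA
          (mul_pos hc (superSmoothDecay_pos (inv_pos.2 hh))) (hφ_lower _ hRh)
    _ = (A / c) ^ Fintype.card ι * (h ^ β₀ * Real.exp (h ^ (-β) / γ)) ^ Fintype.card ι := by
      rw [superSmoothDecay_inv hh.le, ← div_div, div_inv_eq_mul, mul_pow]
    _ = _ := by
      rw [mul_pow, ← Real.rpow_mul_natCast hh.le, ← Real.exp_nat_mul, mul_comm β₀, mul_div_assoc,
        mul_assoc]

/-- Bound on products of deconvoluting kernels for super smooth errors (generalization of
Lemma B.9 of Delaigle et al.).  If `φ_K` is supported in `[−1, 1]` with bounded derivatives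
`φ_K^{(ℓ_q)}`, and `U` is super smooth of order `β` (constants `d₀, d₁, γ > 0`,
`β₀, β₁ ∈ ℝ`) with nowhere-vanishing characteristic function, then there exist `C > 0` and
`h₀ > 0` such that for all `0 < h < h₀`,
`|∫ ∏_q K_{U,ℓ_q}(v) dv| ≤ C h^{Qβ₂} exp(Q h^{−β}/γ)` with `β₂ = β₀·1{β₀ < 1/2}`. -/
theorem prod_deconvoluting_kernel_super_smooth_bound
    {Ω : Type*} [MeasurableSpace Ω] (μ : Measure Ω) [IsProbabilityMeasure μ]
    (U : Ω → ℝ) (hU : Measurable U)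
    (φU : ℝ → ℂ)
    (hφU : ∀ t : ℝ, φU t = ∫ ω, Complex.exp (Complex.I * t * U ω) ∂μ)
    (β γ d₀ d₁ : ℝ) (β₀ β₁ : ℝ) (hβ : 0 < β) (hγ : 0 < γ) (hd₀ : 0 < d₀) (hd₁ : 0 < d₁)
    (hss : ∀ᶠ t : ℝ in atTop,
      d₀ * |t| ^ β₀ * Real.exp (-(|t| ^ β) / γ) ≤ ‖φU t‖ ∧
      ‖φU t‖ ≤ d₁ * |t| ^ β₁ * Real.exp (-(|t| ^ β) / γ))
    (hφU_ne : ∀ t, φU t ≠ 0)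
    (Q : ℕ) (hQ : 2 ≤ Q) (ℓ : Fin Q → ℕ) (φK : ℝ → ℂ)
    (hφK_supp : Function.support φK ⊆ Set.Icc (-1 : ℝ) 1)
    (hφK_bdd : ∀ q : Fin Q, ∃ C : ℝ, ∀ t, ‖iteratedDeriv (ℓ q) φK t‖ ≤ C)
    (KUl : ℝ → ℕ → ℝ → ℂ)
    (hKUl : ∀ (hb : ℝ) (l : ℕ) (v : ℝ), KUl hb l v
      = Complex.I ^ (-(l : ℤ)) * (1 / (2 * Real.pi)) *
          ∫ t : ℝ, Complex.exp (-(Complex.I * t * v)) *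
            (iteratedDeriv l φK t / φU (-t / hb))) :
    ∃ C > (0 : ℝ), ∃ h₀ > (0 : ℝ), ∀ h : ℝ, 0 < h → h < h₀ →
      ‖∫ v : ℝ, ∏ q : Fin Q, KUl h (ℓ q) v‖
        ≤ C * h ^ ((Q : ℝ) * (if β₀ < 1 / 2 then β₀ else 0)) *
            Real.exp ((Q : ℝ) * h ^ (-β) / γ) := by
  have := Measure.isProbabilityMeasure_map (μ := μ) hU.aemeasurable
  obtain rfl := eq_charFun_map hU.aemeasurable hφU
  obtain rfl : KUl = deconvolutingKernel (charFun (μ.map U)) φK :=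
    funext fun h ↦ funext fun l ↦ funext (hKUl h l)
  have hβ₂ : (if β₀ < 1 / 2 then β₀ else 0) ≤ β₀ := by split_ifs <;> linarith
  have h_decay := eventually_cobounded_superSmoothDecay_le_norm_charFun hd₀.le hβ₂
    (hss.mono fun t ht ↦ (mul_assoc _ _ _).ge.trans ht.1)
  simpa only [Fintype.card_fin] using prod_deconvoluting_kernel_super_smooth_bound_general
    (by simpa only [Fintype.card_fin]) ℓ continuous_charFun hφU_ne hβ hγ hd₀ h_decay hφK_supp
    hφK_bdd
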